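/- Let ℛ = (𝒜^{(0)}, (ℬ^{(n)})_{n≥1}) be a renormalization scheme of dimension d ≥ 2 associated to (λ₀,μ,σ), and assume Conditions (C1) and (C2) hold. Then for every n ∈ ℕ and every u, v ∈ 𝕃_n = λ_nℤ^d with ‖u−v‖_∞ ≥ 5σ_n λ_n, the events 𝒜^{(n)}_u and 𝒜^{(n)}_v are independent. -/

import Mathlib

open MeasureTheory ProbabilityTheory Set

noncomputable section

/-- The scale sequence `λ_0 = lam0`, `λ_{n+1} = λ_n μ_n`. -/
def lamSeq (lam0 : ℕ) (μ : ℕ → ℕ) : ℕ → ℕ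
  | 0 => lam0
  | n + 1 => lamSeq lam0 μ n * μ n

/-- The lattice `𝕃 = L ℤ^d` inside `ℤ^d`. -/
def latt (d L : ℕ) : Set (Fin d → ℤ) := {u | ∀ i, (L : ℤ) ∣ u i}

/-- Sup norm on `ℤ^d`. -/
def normInfV {d : ℕ} (v : Fin d → ℤ) : ℕ := Finset.univ.sup fun i => (v i).natAbs

/-- ℓ¹ norm on `ℤ^d`. -/
def norm1V {d : ℕ} (v : Fin d → ℤ) : ℕ := ∑ i, (v i).natAbs

/-- `Λ_n(u) = (u + [0, λ_n)^d) ∩ 𝕃_{n-1}`. -/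
def lamBox {d : ℕ} (lam0 : ℕ) (μ : ℕ → ℕ) (n : ℕ) (u : Fin d → ℤ) : Set (Fin d → ℤ) :=
  {v | v ∈ latt d (lamSeq lam0 μ (n - 1)) ∧
    ∀ i, u i ≤ v i ∧ v i < u i + (lamSeq lam0 μ n : ℤ)}

/-- A renormalization scheme: a collection of seed events (indexed by `𝕃₀`)
and of auxiliary events (indexed by `𝕃_n`, `n ≥ 1`). -/
structure RenormScheme (Ω : Type*) (d : ℕ) where
  seed : (Fin d → ℤ) → Set Ω
  aux : ℕ → (Fin d → ℤ) → Set Ω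

/-- The recursively defined events `𝒜^{(n)}_u` of a renormalization scheme. -/
def Aev {Ω : Type*} {d : ℕ} (lam0 : ℕ) (μ σ : ℕ → ℕ) (S : RenormScheme Ω d) :
    ℕ → (Fin d → ℤ) → Set Ω
  | 0, u => S.seed u
  | n + 1, u =>
    S.aux (n + 1) u ∩
      ⋂ (u₁ : Fin d → ℤ) (u₂ : Fin d → ℤ) (_ : u₁ ∈ lamBox lam0 μ (n + 1) u)
        (_ : u₂ ∈ lamBox lam0 μ (n + 1) u)
        (_ : 5 * σ n * lamSeq lam0 μ n ≤ normInfV (u₁ - u₂)),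
        (Aev lam0 μ σ S n u₁ ∪ Aev lam0 μ σ S n u₂)

/-- Condition (C1): `μ_n ≥ 100 σ_n` and `σ_n ≥ 2`. -/
def Cond1 (μ σ : ℕ → ℕ) : Prop := ∀ n, 100 * σ n ≤ μ n ∧ 2 ≤ σ n

/-- The unique point `w ∈ Lℤ^d` with `v ∈ w + [0, L)^d`. -/
def parentV {d : ℕ} (L : ℕ) (v : Fin d → ℤ) : Fin d → ℤ :=
  fun i => (L : ℤ) * (Int.ediv (v i) (L : ℤ))

/-- The renormalization sequence of `u ∈ 𝕃_m`: `renSeq lam0 μ m u j ∈ 𝕃_{m+j}`. -/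
def renSeq {d : ℕ} (lam0 : ℕ) (μ : ℕ → ℕ) (m : ℕ) (u : Fin d → ℤ) : ℕ → (Fin d → ℤ)
  | 0 => u
  | j + 1 => parentV (lamSeq lam0 μ (m + j + 1)) (renSeq lam0 μ m u j)

/-- The event that `u ∈ 𝕃_m` is good up to scale `n`. -/
def GoodUpTo {Ω : Type*} {d : ℕ} (lam0 : ℕ) (μ σ : ℕ → ℕ) (S : RenormScheme Ω d)
    (m n : ℕ) (u : Fin d → ℤ) : Set Ω :=
  ⋂ k ∈ Finset.Icc m n, Aev lam0 μ σ S k (renSeq lam0 μ m u (k - m))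

/-- The box `u + [-r, r]^d ⊆ ℝ^d` (formal support of seed and auxiliary events). -/
def suppBox {d : ℕ} (u : Fin d → ℤ) (r : ℕ) : Set (Fin d → ℝ) :=
  {x | ∀ i, |x i - (u i : ℝ)| ≤ (r : ℝ)}

/-- The sub-collection of seed and auxiliary events whose formal support is contained
in `D`. -/
def schemeEventsIn {Ω : Type*} {d : ℕ} (lam0 : ℕ) (μ σ : ℕ → ℕ) (S : RenormScheme Ω d)
    (D : Set (Fin d → ℝ)) : Set (Set Ω) :=
  {E | (∃ u ∈ latt d (lamSeq lam0 μ 0), E = S.seed u ∧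
          suppBox u (σ 0 * lamSeq lam0 μ 0) ⊆ D) ∨
       (∃ n : ℕ, 1 ≤ n ∧ ∃ u ∈ latt d (lamSeq lam0 μ n), E = S.aux n u ∧
          suppBox u (σ n * lamSeq lam0 μ n) ⊆ D)}

/-- Condition (C2): collections of seed/auxiliary events with disjoint formal supports
are independent. -/
def Cond2 {Ω : Type*} [MeasureSpace Ω] {d : ℕ} (lam0 : ℕ) (μ σ : ℕ → ℕ)
    (S : RenormScheme Ω d) : Prop :=
  ∀ D₁ D₂ : Set (Fin d → ℝ), Disjoint D₁ D₂ →
    ProbabilityTheory.Indep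
      (MeasurableSpace.generateFrom (schemeEventsIn lam0 μ σ S D₁))
      (MeasurableSpace.generateFrom (schemeEventsIn lam0 μ σ S D₂)) ℙ

/-! Localization: `𝒜^{(n)}_u` is built from seed and auxiliary events whose supports lie within
`2 σ_n λ_n` of `u`. Inductively, the supports of the children at scale `n` reach at most
`λ_{n+1} + 2 σ_n λ_n ≤ 2 λ_{n+1} ≤ 2 σ_{n+1} λ_{n+1}` away from `u`. Points further apart than
`4 σ_n λ_n` therefore carry disjoint supports, and (C2) applies. -/

/-- The formal support of `𝒜^{(n)}_u`: the union of the formal supports of all the seed and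
auxiliary events occurring in its recursive definition. -/
def formalSupport {d : ℕ} (lam0 : ℕ) (μ σ : ℕ → ℕ) : ℕ → (Fin d → ℤ) → Set (Fin d → ℝ)
  | 0, u => suppBox u (σ 0 * lamSeq lam0 μ 0)
  | n + 1, u =>
    suppBox u (σ (n + 1) * lamSeq lam0 μ (n + 1)) ∪
      ⋃ (u₁ : Fin d → ℤ) (u₂ : Fin d → ℤ) (_ : u₁ ∈ lamBox lam0 μ (n + 1) u)
        (_ : u₂ ∈ lamBox lam0 μ (n + 1) u)
        (_ : 5 * σ n * lamSeq lam0 μ n ≤ normInfV (u₁ - u₂)),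
        (formalSupport lam0 μ σ n u₁ ∪ formalSupport lam0 μ σ n u₂)

section Geometry

variable {d : ℕ} {u v : Fin d → ℤ} {r s : ℕ}

lemma normInfV_sub_eq_dist (u v : Fin d → ℤ) :
    (normInfV (u - v) : ℝ) = dist (fun i => (u i : ℝ)) (fun i => (v i : ℝ)) := by
  rw [dist_pi_def, normInfV, ← NNReal.coe_natCast, NNReal.coe_inj,
    Finset.apply_sup_eq_sup_comp (Nat.cast : ℕ → NNReal) Nat.cast_max Nat.cast_zero]
  refine Finset.sup_congr rfl fun i _ => NNReal.eq ?_
  simp only [Function.comp_apply, NNReal.coe_natCast, coe_nndist, Pi.sub_apply, Real.dist_eq,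
    Nat.cast_natAbs, Int.cast_abs, Int.cast_sub]

lemma suppBox_eq_closedBall (u : Fin d → ℤ) (r : ℕ) :
    suppBox u r = Metric.closedBall (fun i => (u i : ℝ)) (r : ℝ) := by
  ext x
  simp only [suppBox, mem_ofPred_eq, Metric.mem_closedBall, dist_pi_le_iff r.cast_nonneg,
    Real.dist_eq]

lemma suppBox_mono (h : r ≤ s) : suppBox u r ⊆ suppBox u s := by
  simpa only [suppBox_eq_closedBall] using Metric.closedBall_subset_closedBall (Nat.cast_le.2 h)

lemma suppBox_subset_suppBox (h : r + normInfV (u - v) ≤ s) : suppBox u r ⊆ suppBox v s := by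
  rw [suppBox_eq_closedBall, suppBox_eq_closedBall]
  apply Metric.closedBall_subset_closedBall'
  rw [← normInfV_sub_eq_dist]
  exact_mod_cast h

lemma disjoint_suppBox (h : r + s < normInfV (u - v)) : Disjoint (suppBox u r) (suppBox v s) := by
  rw [suppBox_eq_closedBall, suppBox_eq_closedBall]
  apply Metric.closedBall_disjoint_closedBall
  rw [← normInfV_sub_eq_dist]
  exact_mod_cast h

end Geometry

section Scales

variable {d lam0 n : ℕ} {μ σ : ℕ → ℕ} {u w : Fin d → ℤ}

lemma lamSeq_pos (hlam0 : 0 < lam0) (hμ : ∀ n, 0 < μ n) (n : ℕ) : 0 < lamSeq lam0 μ n := by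
  induction n with
  | zero => exact hlam0
  | succ n ih => exact Nat.mul_pos ih (hμ n)

lemma normInfV_sub_le_of_mem_lamBox (hw : w ∈ lamBox lam0 μ n u) :
    normInfV (w - u) ≤ lamSeq lam0 μ n := by
  refine Finset.sup_le fun i _ => ?_
  have := hw.2 i
  rw [Pi.sub_apply]
  omega

lemma suppBox_subset_of_mem_lamBox (hσ : 0 < σ (n + 1)) (hσμ : 2 * σ n ≤ μ n)
    (hw : w ∈ lamBox lam0 μ (n + 1) u) :
    suppBox w (2 * σ n * lamSeq lam0 μ n) ⊆
      suppBox u (2 * σ (n + 1) * lamSeq lam0 μ (n + 1)) := by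
  apply suppBox_subset_suppBox
  calc 2 * σ n * lamSeq lam0 μ n + normInfV (w - u)
      ≤ μ n * lamSeq lam0 μ n + lamSeq lam0 μ (n + 1) :=
        add_le_add (Nat.mul_le_mul_right _ hσμ) (normInfV_sub_le_of_mem_lamBox hw)
    _ = 2 * lamSeq lam0 μ (n + 1) := by rw [lamSeq]; ring
    _ ≤ 2 * σ (n + 1) * lamSeq lam0 μ (n + 1) :=
        Nat.mul_le_mul_right _ (Nat.le_mul_of_pos_right 2 hσ)

lemma formalSupport_subset_suppBox (hσ : ∀ n, 0 < σ n) (hσμ : ∀ n, 2 * σ n ≤ μ n) (n : ℕ)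
    (u : Fin d → ℤ) :
    formalSupport lam0 μ σ n u ⊆ suppBox u (2 * σ n * lamSeq lam0 μ n) := by
  have hmono (n : ℕ) (u : Fin d → ℤ) :
      suppBox u (σ n * lamSeq lam0 μ n) ⊆ suppBox u (2 * σ n * lamSeq lam0 μ n) :=
    suppBox_mono (Nat.mul_le_mul_right _ (Nat.le_mul_of_pos_left _ two_pos))
  induction n generalizing u with
  | zero => exact hmono 0 u
  | succ n ih =>
    have hchild {w : Fin d → ℤ} (hw : w ∈ lamBox lam0 μ (n + 1) u) :=
      (ih w).trans (suppBox_subset_of_mem_lamBox (hσ (n + 1)) (hσμ n) hw)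
    refine union_subset (hmono (n + 1) u) ?_
    simp only [iUnion_subset_iff]
    exact fun u₁ u₂ h₁ h₂ _ => union_subset (hchild h₁) (hchild h₂)

end Scales

section Independence

variable {Ω : Type*} {d lam0 m n : ℕ} {μ σ : ℕ → ℕ} {S : RenormScheme Ω d} {u v : Fin d → ℤ}

lemma measurableSet_Aev {D : Set (Fin d → ℝ)} (hu : u ∈ latt d (lamSeq lam0 μ n))
    (hD : formalSupport lam0 μ σ n u ⊆ D) :
    MeasurableSet[MeasurableSpace.generateFrom (schemeEventsIn lam0 μ σ S D)]
      (Aev lam0 μ σ S n u) := by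
  induction n generalizing u with
  | zero => exact MeasurableSpace.measurableSet_generateFrom (.inl ⟨u, hu, rfl, hD⟩)
  | succ n ih =>
    simp only [formalSupport, union_subset_iff, iUnion_subset_iff] at hD
    obtain ⟨hDaux, hDchildren⟩ := hD
    refine .inter (MeasurableSpace.measurableSet_generateFrom
      (.inr ⟨n + 1, n.succ_pos, u, hu, rfl, hDaux⟩)) ?_
    refine .iInter fun u₁ => .iInter fun u₂ => .iInter fun h₁ => .iInter fun h₂ =>
      .iInter fun hfar => ?_
    have hD₁₂ := hDchildren u₁ u₂ h₁ h₂ hfar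
    exact (ih h₁.1 hD₁₂.1).union (ih h₂.1 hD₁₂.2)

lemma indepSet_Aev_of_disjoint_formalSupport [MeasureSpace Ω] (hC2 : Cond2 lam0 μ σ S)
    (hu : u ∈ latt d (lamSeq lam0 μ m)) (hv : v ∈ latt d (lamSeq lam0 μ n))
    (hdisj : Disjoint (formalSupport lam0 μ σ m u) (formalSupport lam0 μ σ n v)) :
    IndepSet (Aev lam0 μ σ S m u) (Aev lam0 μ σ S n v) ℙ :=
  (hC2 _ _ hdisj).indepSet_of_measurableSet (measurableSet_Aev hu subset_rfl)
    (measurableSet_Aev hv subset_rfl)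

end Independence

theorem stmt13_general {Ω : Type*} [MeasureSpace Ω] {d lam0 : ℕ} {μ σ : ℕ → ℕ}
    (hσ : ∀ n, 0 < σ n) (hσμ : ∀ n, 2 * σ n ≤ μ n)
    {S : RenormScheme Ω d} (hC2 : Cond2 lam0 μ σ S) {n : ℕ} {u v : Fin d → ℤ}
    (hu : u ∈ latt d (lamSeq lam0 μ n)) (hv : v ∈ latt d (lamSeq lam0 μ n))
    (hdist : 4 * σ n * lamSeq lam0 μ n < normInfV (u - v)) :
    IndepSet (Aev lam0 μ σ S n u) (Aev lam0 μ σ S n v) ℙ := by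
  have hdisj : Disjoint (suppBox u (2 * σ n * lamSeq lam0 μ n))
      (suppBox v (2 * σ n * lamSeq lam0 μ n)) :=
    disjoint_suppBox (by linarith)
  exact indepSet_Aev_of_disjoint_formalSupport hC2 hu hv <|
    hdisj.mono (formalSupport_subset_suppBox hσ hσμ n u) (formalSupport_subset_suppBox hσ hσμ n v)

theorem stmt13 {Ω : Type*} [MeasureSpace Ω] [IsProbabilityMeasure (ℙ : Measure Ω)]
    (d : ℕ) (hd : 2 ≤ d) (lam0 : ℕ) (hlam0 : 0 < lam0) (μ σ : ℕ → ℕ)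
    (hμ : ∀ n, 0 < μ n) (hσ : ∀ n, 0 < σ n) (hC1 : Cond1 μ σ)
    (S : RenormScheme Ω d) (hC2 : Cond2 lam0 μ σ S)
    (n : ℕ) (u v : Fin d → ℤ)
    (hu : u ∈ latt d (lamSeq lam0 μ n)) (hv : v ∈ latt d (lamSeq lam0 μ n))
    (hdist : 5 * σ n * lamSeq lam0 μ n ≤ normInfV (u - v)) :
    ProbabilityTheory.IndepSet (Aev lam0 μ σ S n u) (Aev lam0 μ σ S n v) ℙ := by
  have hpos : 0 < σ n * lamSeq lam0 μ n := Nat.mul_pos (hσ n) (lamSeq_pos hlam0 hμ n)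
  exact stmt13_general hσ (fun k => by linarith [(hC1 k).1]) hC2 hu hv (by linarith)

end
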